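/- For every natural number d ≥ 2 there exists a real constant K_d > 0 such that for all natural numbers p ≥ 1 and g, setting n = 2p, if g ≤ (2 + n(d−1))/4 then 3^{4n} · (n−1)! · 4^{n+1} · (2g)! / (p!)² ≤ K_d^n · n^{2g}. -/

import Mathlib

/-!
Write `n = 2p`. Since `(n choose p) ≤ 2 ^ n`, the symmetry factor `(p!)²` cancels `(n - 1)!` up
to an exponential in `n`. The genus bound makes the number `2g` of crossing edges at most a
constant multiple of `n`, so `(2g)! ≤ (2g) ^ (2g)` is at most `n ^ (2g)` times another exponential
in `n`.
-/

open scoped Nat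

theorem factorial_add_le_two_pow_mul (a b : ℕ) : (a + b)! ≤ 2 ^ (a + b) * (a ! * b !) :=
  calc (a + b)! = (a + b).choose b * (a ! * b !) := by
        rw [← mul_assoc, Nat.add_choose_mul_factorial_mul_factorial]
    _ ≤ 2 ^ (a + b) * (a ! * b !) := Nat.mul_le_mul_right _ (Nat.choose_le_two_pow _ _)

theorem factorial_two_mul_sub_one_le (p : ℕ) : (2 * p - 1)! ≤ 2 ^ (2 * p) * p ! ^ 2 :=
  calc (2 * p - 1)! ≤ (2 * p)! := Nat.factorial_le (Nat.sub_le _ _)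
    _ ≤ 2 ^ (2 * p) * p ! ^ 2 := by
        simpa only [two_mul, sq] using factorial_add_le_two_pow_mul p p

theorem factorial_le_of_le_mul {c n m : ℕ} (hm : m ≤ c * n) : m ! ≤ (c ^ c) ^ n * n ^ m := by
  obtain rfl | hc := c.eq_zero_or_pos
  · obtain rfl : m = 0 := by simpa using hm
    simp
  · calc m ! ≤ m ^ m := Nat.factorial_le_pow m
      _ ≤ (c * n) ^ m := Nat.pow_le_pow_left hm m
      _ = c ^ m * n ^ m := mul_pow c n m
      _ ≤ c ^ (c * n) * n ^ m := by gcongr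
      _ = (c ^ c) ^ n * n ^ m := by rw [pow_mul]

theorem two_mul_genus_le_ceil_mul {d : ℝ} {p g : ℕ} (hp : 1 ≤ p)
    (hg : (g : ℝ) ≤ (2 + (2 * p : ℕ) * (d - 1)) / 4) : 2 * g ≤ ⌈d / 2⌉₊ * (2 * p) := by
  have hp' : (1 : ℝ) ≤ p := by exact_mod_cast hp
  have : (2 * g : ℝ) ≤ ⌈d / 2⌉₊ * (2 * p) :=
    calc (2 * g : ℝ) ≤ d / 2 * (2 * p) := by push_cast at hg; linarith
      _ ≤ ⌈d / 2⌉₊ * (2 * p) := by gcongr; exact Nat.le_ceil _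
  exact_mod_cast this

theorem wick_contraction_bound_of_le_mul {c p m : ℕ} (hp : 1 ≤ p) (hm : m ≤ c * (2 * p)) :
    3 ^ (4 * (2 * p)) * (2 * p - 1)! * 4 ^ (2 * p + 1) * m ! ≤
      (3 ^ 4 * 2 * 4 ^ 2 * c ^ c) ^ (2 * p) * (2 * p) ^ m * p ! ^ 2 := by
  have hcatalan : 4 ^ (2 * p + 1) ≤ (4 ^ 2) ^ (2 * p) := by
    rw [← pow_mul]
    exact Nat.pow_le_pow_right (by norm_num) (by omega)
  calc 3 ^ (4 * (2 * p)) * (2 * p - 1)! * 4 ^ (2 * p + 1) * m !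
      ≤ (3 ^ 4) ^ (2 * p) * (2 ^ (2 * p) * p ! ^ 2) * (4 ^ 2) ^ (2 * p) *
          ((c ^ c) ^ (2 * p) * (2 * p) ^ m) := by
        rw [pow_mul 3 4]
        gcongr
        exacts [factorial_two_mul_sub_one_le p, factorial_le_of_le_mul hm]
    _ = (3 ^ 4 * 2 * 4 ^ 2 * c ^ c) ^ (2 * p) * (2 * p) ^ m * p ! ^ 2 := by
        simp only [mul_pow _ _ (2 * p)]
        ring

theorem wick_contraction_bound_general (d : ℝ) :
    ∃ K : ℝ, 0 < K ∧ ∀ p g : ℕ, 1 ≤ p →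
      (g : ℝ) ≤ (2 + (2 * p : ℕ) * (d - 1)) / 4 →
      (3 : ℝ) ^ (4 * (2 * p)) * ((2 * p - 1)! : ℝ) * (4 : ℝ) ^ (2 * p + 1) *
          ((2 * g)! : ℝ) / (p ! : ℝ) ^ 2 ≤
        K ^ (2 * p) * ((2 * p : ℕ) : ℝ) ^ (2 * g) := by
  let c := ⌈d / 2⌉₊
  have hc : 0 < c ^ c := Nat.pow_self_pos
  refine ⟨(3 ^ 4 * 2 * 4 ^ 2 * c ^ c : ℕ), by positivity, fun p g hp hg => ?_⟩
  rw [div_le_iff₀ (by positivity)]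
  exact_mod_cast wick_contraction_bound_of_le_mul hp (two_mul_genus_le_ceil_mul hp hg)

/-- For every `d ≥ 2` there is a constant `K_d > 0` such that for all `p ≥ 1` and all `g`
with `g ≤ (2 + n(d-1))/4` where `n = 2p`, one has
`3^(4n) * (n-1)! * 4^(n+1) * (2g)! / (p!)^2 ≤ K_d^n * n^(2g)`. -/
theorem wick_contraction_bound (d : ℕ) (hd : 2 ≤ d) :
    ∃ K : ℝ, 0 < K ∧ ∀ p g : ℕ, 1 ≤ p →
      (g : ℝ) ≤ (2 + (2 * p : ℕ) * ((d : ℝ) - 1)) / 4 →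
      (3 : ℝ) ^ (4 * (2 * p)) * (Nat.factorial (2 * p - 1) : ℝ) * (4 : ℝ) ^ (2 * p + 1) *
          (Nat.factorial (2 * g) : ℝ) / ((Nat.factorial p : ℝ)) ^ 2 ≤
        K ^ (2 * p) * ((2 * p : ℕ) : ℝ) ^ (2 * g) :=
  wick_contraction_bound_general d
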